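/- For the case K = 1: let L : ℝⁿ × ℝᵐ → ℝ be C², α > 0, b⁰ : ℝⁿ → ℝᵐ differentiable, and b¹(a) = b⁰(a) + α ∇_b L(a, b⁰(a)). Then d/da [L(a, b¹(a))] = ∂_a L(a, b¹(a)) + (Db⁰(a))ᵀ (I + α ∇²_{bb}L(a, b⁰(a)))ᵀ ∇_b L(a, b¹(a)) + α (∇²_{ab}L(a, b⁰(a)))ᵀ ∇_b L(a, b¹(a)). -/

import Mathlib

/-- One-step (`K = 1`) semi-amortized variational inference gradient:
for `b¹(a) = b⁰(a) + α ∇_b L(a, b⁰(a))`,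
`d/da L(a,b¹(a)) = ∂_a L(a,b¹(a)) + (Db⁰(a))ᵀ(I + α∇²_{bb}L(a,b⁰(a)))ᵀ ∇_b L(a,b¹(a))
  + α (∇²_{ab}L(a,b⁰(a)))ᵀ ∇_b L(a,b¹(a))`. -/
theorem stmt_2 {n m : ℕ}
    (L : EuclideanSpace ℝ (Fin n) → EuclideanSpace ℝ (Fin m) → ℝ)
    (hL : ContDiff ℝ 2 (fun p : EuclideanSpace ℝ (Fin n) × EuclideanSpace ℝ (Fin m) => L p.1 p.2))
    (α : ℝ) (hα : 0 < α)
    (b0 : EuclideanSpace ℝ (Fin n) → EuclideanSpace ℝ (Fin m))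
    (hb0 : Differentiable ℝ b0)
    (b1 : EuclideanSpace ℝ (Fin n) → EuclideanSpace ℝ (Fin m))
    (hb1 : ∀ a, b1 a = b0 a + α • gradient (L a) (b0 a))
    (a : EuclideanSpace ℝ (Fin n)) :
    gradient (fun a' => L a' (b1 a')) a
      = gradient (fun a' => L a' (b1 a)) a
        + (ContinuousLinearMap.adjoint (fderiv ℝ b0 a))
            ((ContinuousLinearMap.adjoint
                (ContinuousLinearMap.id ℝ (EuclideanSpace ℝ (Fin m))
                  + α • fderiv ℝ (gradient (L a)) (b0 a)))
              (gradient (L a) (b1 a)))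
        + α • (ContinuousLinearMap.adjoint
            (fderiv ℝ (fun a' => gradient (L a') (b0 a)) a)) (gradient (L a) (b1 a)) := by
  set F : EuclideanSpace ℝ (Fin n) × EuclideanSpace ℝ (Fin m) → ℝ := fun p => L p.1 p.2 with hF
  have hFd : Differentiable ℝ F := hL.differentiable (by norm_num)
  have hinr : ∀ (x : EuclideanSpace ℝ (Fin n)) (y : EuclideanSpace ℝ (Fin m)),
      HasFDerivAt (fun y' => (x, y')) (ContinuousLinearMap.inr ℝ _ _) y :=
    fun x y => hasFDerivAt_prodMk_right x y
  have hinl : ∀ (x : EuclideanSpace ℝ (Fin n)) (y : EuclideanSpace ℝ (Fin m)),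
      HasFDerivAt (fun x' => (x', y)) (ContinuousLinearMap.inl ℝ _ _) x :=
    fun x y => hasFDerivAt_prodMk_left x y
  have hLy : ∀ x y, HasFDerivAt (L x) ((fderiv ℝ F (x, y)).comp
      (ContinuousLinearMap.inr ℝ _ _)) y := fun x y =>
    HasFDerivAt.comp (g := F) y (hFd (x, y)).hasFDerivAt (hinr x y)
  have hLx : ∀ x y, HasFDerivAt (fun x' => L x' y) ((fderiv ℝ F (x, y)).comp
      (ContinuousLinearMap.inl ℝ _ _)) x := fun x y =>
    HasFDerivAt.comp (g := F) x (hFd (x, y)).hasFDerivAt (hinl x y)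
  set G : EuclideanSpace ℝ (Fin n) × EuclideanSpace ℝ (Fin m) → EuclideanSpace ℝ (Fin m) :=
    fun p => gradient (L p.1) p.2 with hG
  have hGd : Differentiable ℝ G := by
    have h1 : Differentiable ℝ (fderiv ℝ F) :=
      (hL.fderiv_right (m := 1) (by norm_num)).differentiable (by norm_num)
    have h2 : G = fun p => (InnerProductSpace.toDual ℝ (EuclideanSpace ℝ (Fin m))).symm
        ((fderiv ℝ F p).comp (ContinuousLinearMap.inr ℝ _ _)) := by
      funext p
      simp only [hG, gradient]
      rw [(hLy p.1 p.2).fderiv]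
    rw [h2]
    have h3 : Differentiable ℝ (fun p => (fderiv ℝ F p).comp (ContinuousLinearMap.inr ℝ
      (EuclideanSpace ℝ (Fin n)) (EuclideanSpace ℝ (Fin m)))) :=
      h1.clm_comp (differentiable_const _)
    exact fun p => ((InnerProductSpace.toDual ℝ
      (EuclideanSpace ℝ (Fin m))).symm.toContinuousLinearEquiv.differentiableAt).comp p (h3 p)
  have hGy : HasFDerivAt (gradient (L a)) ((fderiv ℝ G (a, b0 a)).comp
      (ContinuousLinearMap.inr ℝ _ _)) (b0 a) :=
    HasFDerivAt.comp (g := G) (b0 a) (hGd (a, b0 a)).hasFDerivAt (hinr a (b0 a))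
  have hGx : HasFDerivAt (fun x' => gradient (L x') (b0 a)) ((fderiv ℝ G (a, b0 a)).comp
      (ContinuousLinearMap.inl ℝ _ _)) a :=
    HasFDerivAt.comp (g := G) a (hGd (a, b0 a)).hasFDerivAt (hinl a (b0 a))
  have hb0' := (hb0 a).hasFDerivAt
  have hGb : HasFDerivAt (fun x => G (x, b0 x)) ((fderiv ℝ G (a, b0 a)).comp
      ((ContinuousLinearMap.id ℝ _).prod (fderiv ℝ b0 a))) a :=
    HasFDerivAt.comp (g := G) (f := fun x => (x, b0 x)) a (hGd (a, b0 a)).hasFDerivAt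
      ((hasFDerivAt_id a).prodMk hb0')
  have hb1' : HasFDerivAt b1 (fderiv ℝ b0 a + α • ((fderiv ℝ G (a, b0 a)).comp
      ((ContinuousLinearMap.id ℝ _).prod (fderiv ℝ b0 a)))) a := by
    have e : b1 = fun x => b0 x + α • G (x, b0 x) := funext hb1
    rw [e]
    exact hb0'.add (hGb.const_smul α)
  have htot := HasFDerivAt.comp (g := F) (f := fun x => (x, b1 x)) a
    (hFd (a, b1 a)).hasFDerivAt ((hasFDerivAt_id a).prodMk hb1')
  have htot' : fderiv ℝ (fun a' => L a' (b1 a')) a = _ := htot.fderiv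
  have hgi : ∀ {k : ℕ} (f : EuclideanSpace ℝ (Fin k) → ℝ) (x v : EuclideanSpace ℝ (Fin k)),
      inner ℝ (gradient f x) v = fderiv ℝ f x v := by
    intro k f x v
    simp [gradient]
  have split : ∀ {X : Type} [NormedAddCommGroup X] [NormedSpace ℝ X]
      (T : EuclideanSpace ℝ (Fin n) × EuclideanSpace ℝ (Fin m) →L[ℝ] X) u v,
      T (u, v) = T (u, 0) + T (0, v) := by
    intro X _ _ T u v
    rw [← map_add]; simp
  refine ext_inner_right ℝ fun v => ?_
  rw [inner_add_left, inner_add_left, inner_smul_left, ContinuousLinearMap.adjoint_inner_left,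
    ContinuousLinearMap.adjoint_inner_left, ContinuousLinearMap.adjoint_inner_left,
    hgi, hgi, hgi, hgi, htot', hGy.fderiv, hGx.fderiv, (hLx a (b1 a)).fderiv,
    (hLy a (b1 a)).fderiv]
  have e1 := split (fderiv ℝ G (a, b0 a)) v (fderiv ℝ b0 a v)
  have e2 := split (fderiv ℝ F (a, b1 a)) v
    (fderiv ℝ b0 a v + α • fderiv ℝ G (a, b0 a) (v, fderiv ℝ b0 a v))
  have e3 : ∀ y z w : EuclideanSpace ℝ (Fin m), fderiv ℝ F (a, b1 a) (0, y + α • (z + w))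
      = fderiv ℝ F (a, b1 a) (0, y + α • w) + α * fderiv ℝ F (a, b1 a) (0, z) := by
    intro y z w
    rw [← smul_eq_mul, ← map_smul, ← map_add]
    congr 1
    ext1
    · simp
    · simp only [Prod.snd_add, Prod.smul_mk, smul_add]; abel
  have e4 : fderiv ℝ F (a, b1 a) (v, fderiv ℝ b0 a v +
        α • fderiv ℝ G (a, b0 a) (v, fderiv ℝ b0 a v))
      = fderiv ℝ F (a, b1 a) (v, 0) + fderiv ℝ F (a, b1 a) (0, fderiv ℝ b0 a v +
        α • fderiv ℝ G (a, b0 a) (0, fderiv ℝ b0 a v))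
        + α * fderiv ℝ F (a, b1 a) (0, fderiv ℝ G (a, b0 a) (v, 0)) := by
    rw [e2, e1, e3, add_assoc]
  simpa using e4
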